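/- arXiv:1806.08351 — 3 statements merged into one kernel-verified Lean document; each statement's English description precedes it below -/
import Mathlib

section
/- Normal-fan duality for ℓ-reflexive polygons: Let ℓ be a positive integer, Q ⊆ ℝ² an ℓ-reflexive polygon with respect to ℤ², F an edge of Q, and η ∈ ℤ² the primitive vector with F ⊆ {y ∈ ℝ² : ⟨η,y⟩ = −ℓ}. Then η is a vertex (extreme point) of the dual Q* := ℓ·Q°, and {y ∈ ℝ² : ⟨x − η, y⟩ ≥ 0 for all x ∈ Q*} = {λ·z : λ ∈ ℝ, λ ≥ 0, z ∈ F}; that is, the dual of the vertex cone of Q* at η equals the cone over the edge F. -/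
/-!
Let `ζ` be a functional cutting out `F` as its argmin set. As `0` is interior to `Q`, the minimum of
`ζ` on `Q` is negative, so two distinct points `a, b` of `F` span `ℝ²` (`eq_of_dotV_eq`). Comparing
values at `a, b` shows that `η` is a positive multiple of `ζ`; hence `⟨η, ·⟩ ≥ -ℓ` on `Q`, with
equality exactly on `F` (`edge_eq_supporting`). Now `Q*` consists of all `x` with `⟨x, ·⟩ ≥ -ℓ`
on `Q`, so `η ∈ Q*`, and `η` is extreme because the constraints at `a` and `b`, tight at `η`,
determine it.

For the cones, one inclusion is immediate. Conversely, let `y ≠ 0` satisfy `⟨x - η, y⟩ ≥ 0` for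
all `x ∈ Q*`. Since `Q` is bounded, `Q*` contains a small negative multiple of `y`, whence
`⟨η, y⟩ < 0`. The positive multiple `z` of `y` with `⟨η, z⟩ = -ℓ` satisfies `⟨x, z⟩ ≥ -ℓ` for all
`x ∈ Q*`, so `z ∈ Q` by the bipolar theorem (`mem_of_dual_le`, from Hahn-Banach separation), and
therefore `z ∈ F`.
-/

open Set

noncomputable section

abbrev V : Type := ℝ × ℝ

/-- Standard inner product on ℝ². -/
def dotV (x y : V) : ℝ := x.1 * y.1 + x.2 * y.2

/-- The standard lattice ℤ² viewed inside ℝ². -/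
def latticePts : Set V := {x : V | ∃ p : ℤ × ℤ, x = ((p.1 : ℝ), (p.2 : ℝ))}

/-- A polygon: convex hull of a finite set of points that affinely spans ℝ². -/
def IsPolygon (Q : Set V) : Prop :=
  ∃ A : Finset V, Q = convexHull ℝ (A : Set V) ∧ affineSpan ℝ (A : Set V) = ⊤

/-- An edge of `Q`: a one-dimensional face, i.e. the argmin set of some nonzero
linear functional, containing more than one point. -/
def IsEdge (Q F : Set V) : Prop :=
  (∃ η : V, η ≠ 0 ∧ F = {y ∈ Q | ∀ z ∈ Q, dotV η y ≤ dotV η z}) ∧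
    ∃ y₁ ∈ F, ∃ y₂ ∈ F, y₁ ≠ y₂

/-- A primitive lattice point: the only lattice points on the segment `conv {0, v}`
are `0` and `v`. -/
def IsPrimitive (v : V) : Prop :=
  v ∈ latticePts ∧ v ≠ 0 ∧ segment ℝ (0 : V) v ∩ latticePts = {(0 : V), v}

/-- An ℓ-reflexive polygon with respect to ℤ². -/
structure IsLReflexive (ℓ : ℕ) (Q : Set V) : Prop where
  polygon : IsPolygon Q
  vertices_primitive : ∀ v ∈ Set.extremePoints ℝ Q, IsPrimitive v
  zero_mem_interior : (0 : V) ∈ interior Q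
  edge_cond : ∀ F, IsEdge Q F →
    ∃ η : V, IsPrimitive η ∧ F ⊆ {y : V | dotV η y = -(ℓ : ℝ)}

/-- The polar polygon `Q° = {x | ⟨x,y⟩ ≥ -1 for all y ∈ Q}`. -/
def polarPolygon (Q : Set V) : Set V := {x : V | ∀ y ∈ Q, -1 ≤ dotV x y}

/-- The dual of an ℓ-reflexive polygon: `Q* = ℓ·Q°`. -/
def dualPolygon (ℓ : ℕ) (Q : Set V) : Set V := (fun x : V => (ℓ : ℝ) • x) '' polarPolygon Q

theorem mem_dualPolygon_iff {ℓ : ℕ} (hℓ : 0 < ℓ) {Q : Set V} {x : V} :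
    x ∈ dualPolygon ℓ Q ↔ ∀ y ∈ Q, -(ℓ : ℝ) ≤ dotV x y := by
  have hl : (0 : ℝ) < ℓ := by exact_mod_cast hℓ
  constructor
  · rintro ⟨u, hu, rfl⟩ y hy
    have h := hu y hy
    simp only [dotV, Prod.smul_fst, Prod.smul_snd, smul_eq_mul] at h ⊢
    nlinarith
  · intro h
    refine ⟨(ℓ : ℝ)⁻¹ • x, fun y hy => ?_, by simp [smul_smul, hl.ne']⟩
    have h1 := mul_le_mul_of_nonneg_left (h y hy) (inv_nonneg.2 hl.le)
    have h2 : (ℓ : ℝ)⁻¹ * -(ℓ : ℝ) = -1 := by field_simp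
    simp only [dotV, Prod.smul_fst, Prod.smul_snd, smul_eq_mul] at h1 ⊢
    linarith

theorem dotV_self_pos {v : V} (hv : v ≠ 0) : 0 < dotV v v := by
  simp only [dotV]
  by_contra! h
  apply hv
  ext
  · simp only [Prod.fst_zero]; nlinarith [sq_nonneg v.1, sq_nonneg v.2]
  · simp only [Prod.snd_zero]; nlinarith [sq_nonneg v.1, sq_nonneg v.2]

theorem smul_dotV (c : ℝ) (x y : V) : dotV (c • x) y = c * dotV x y := by
  simp only [dotV, Prod.smul_fst, Prod.smul_snd, smul_eq_mul]
  ring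

theorem dotV_smul (c : ℝ) (x y : V) : dotV x (c • y) = c * dotV x y := by
  simp only [dotV, Prod.smul_fst, Prod.smul_snd, smul_eq_mul]
  ring

theorem sub_dotV (x y z : V) : dotV (x - y) z = dotV x z - dotV y z := by
  simp only [dotV, Prod.fst_sub, Prod.snd_sub]
  ring

/-- Two distinct points on a line missing the origin span the plane, so a vector is determined by
its inner products with them. -/
theorem eq_of_dotV_eq {ζ a b x y : V} {r : ℝ} (hr : r ≠ 0) (ha : dotV ζ a = r)
    (hb : dotV ζ b = r) (hab : a ≠ b) (hxa : dotV x a = dotV y a) (hxb : dotV x b = dotV y b) :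
    x = y := by
  simp only [dotV] at *
  have hd : a.1 * b.2 - a.2 * b.1 ≠ 0 := by
    intro hd
    apply hab
    ext
    · apply mul_left_cancel₀ hr
      linear_combination ζ.2 * hd - a.1 * hb + b.1 * ha
    · apply mul_left_cancel₀ hr
      linear_combination -ζ.1 * hd - a.2 * hb + b.2 * ha
  ext
  · apply mul_left_cancel₀ hd
    linear_combination b.2 * hxa - a.2 * hxb
  · apply mul_left_cancel₀ hd
    linear_combination a.1 * hxb - b.1 * hxa

/-- A nonzero functional takes a negative value on any neighbourhood of the origin. -/
theorem exists_dotV_neg {Q : Set V} (h0 : (0 : V) ∈ interior Q) {ζ : V} (hζ : ζ ≠ 0) :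
    ∃ q ∈ Q, dotV ζ q < 0 := by
  have hc : Filter.Tendsto (fun t : ℝ => (-t) • ζ) (nhdsWithin 0 (Ioi 0)) (nhds (0 : V)) := by
    have : Continuous fun t : ℝ => (-t) • ζ := by fun_prop
    simpa using (this.tendsto 0).mono_left nhdsWithin_le_nhds
  obtain ⟨t, htQ, ht⟩ :=
    ((hc.eventually (mem_interior_iff_mem_nhds.1 h0)).and self_mem_nhdsWithin).exists
  refine ⟨_, htQ, ?_⟩
  have ht : 0 < t := ht
  rw [dotV_smul]
  nlinarith [mul_pos ht (dotV_self_pos hζ)]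

/-- A vector `η` whose product is constant, equal to `-r < 0`, on an edge `F` is an inner normal of
that edge: `⟨η, ·⟩ ≥ -r` is valid on `Q` and `F` is the locus of equality. -/
theorem edge_eq_supporting {Q F : Set V} (h0 : (0 : V) ∈ interior Q) (hF : IsEdge Q F)
    {η : V} {r : ℝ} (hr : 0 < r) (hFη : F ⊆ {y : V | dotV η y = -r}) :
    (∀ q ∈ Q, -r ≤ dotV η q) ∧ F = {y ∈ Q | dotV η y = -r} := by
  obtain ⟨⟨ζ, hζ, hFζ⟩, a, ha, b, hb, hab⟩ := hF
  have ha' := ha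
  have hb' := hb
  rw [hFζ] at ha' hb'
  obtain ⟨q, hq, hqneg⟩ := exists_dotV_neg h0 hζ
  have hm : dotV ζ a < 0 := (ha'.2 q hq).trans_lt hqneg
  have hba : dotV ζ b = dotV ζ a := le_antisymm (hb'.2 a ha'.1) (ha'.2 b hb'.1)
  have hηa : dotV η a = -r := hFη ha
  have hηb : dotV η b = -r := hFη hb
  obtain ⟨c, hc, hca⟩ : ∃ c : ℝ, 0 < c ∧ c * dotV ζ a = -r :=
    ⟨-r / dotV ζ a, div_pos_of_neg_of_neg (by linarith) hm, div_mul_cancel₀ _ hm.ne⟩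
  have hη : η = c • ζ := eq_of_dotV_eq hm.ne rfl hba hab
    (by rw [smul_dotV, hca, hηa]) (by rw [smul_dotV, hba, hca, hηb])
  have hmin : ∀ q ∈ Q, -r ≤ dotV η q := by
    intro q hq
    rw [hη, smul_dotV, ← hca]
    exact mul_le_mul_of_nonneg_left (ha'.2 q hq) hc.le
  refine ⟨hmin, Subset.antisymm (fun y hy => ⟨?_, hFη hy⟩) ?_⟩
  · rw [hFζ] at hy
    exact hy.1
  · rintro y ⟨hy, hyη⟩
    rw [hFζ]
    refine ⟨hy, fun z hz => ?_⟩
    have h := hmin z hz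
    rw [← hyη, hη, smul_dotV, smul_dotV] at h
    exact le_of_mul_le_mul_left h hc

/-- The nontrivial inclusion of the bipolar theorem. -/
theorem mem_of_dual_le {ℓ : ℕ} (hℓ : 0 < ℓ) {Q : Set V} (hconv : Convex ℝ Q) (hcl : IsClosed Q)
    (h0 : (0 : V) ∈ Q) {z : V} (hz : ∀ x ∈ dualPolygon ℓ Q, -(ℓ : ℝ) ≤ dotV x z) : z ∈ Q := by
  have hl : (0 : ℝ) < ℓ := by exact_mod_cast hℓ
  by_contra hzQ
  obtain ⟨f, u, hfz, hfQ⟩ := geometric_hahn_banach_point_closed hconv hcl hzQ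
  have hu : u < 0 := by simpa using hfQ 0 h0
  have hf : ∀ v : V, f v = dotV (f (1, 0), f (0, 1)) v := by
    intro v
    have hv : v = v.1 • ((1, 0) : V) + v.2 • ((0, 1) : V) := by ext <;> simp
    conv_lhs => rw [hv]
    rw [map_add, map_smul, map_smul, smul_eq_mul, smul_eq_mul]
    simp only [dotV]
    ring
  -- The separating functional is rescaled so that the separating level `u` becomes `-ℓ`.
  obtain ⟨c, hc, hcu⟩ : ∃ c : ℝ, 0 < c ∧ c * u = -(ℓ : ℝ) :=
    ⟨-(ℓ : ℝ) / u, div_pos_of_neg_of_neg (by linarith) hu, div_mul_cancel₀ _ hu.ne⟩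
  have h1 := hz (c • (f (1, 0), f (0, 1))) <| (mem_dualPolygon_iff hℓ).2 fun q hq => by
    rw [smul_dotV, ← hf, ← hcu]
    exact mul_le_mul_of_nonneg_left (hfQ q hq).le hc.le
  rw [smul_dotV, ← hf, ← hcu] at h1
  exact absurd (le_of_mul_le_mul_left h1 hc) (not_le.2 hfz)

/-- Since `Q` is bounded, its dual contains a small negative multiple of every vector. -/
theorem exists_neg_smul_mem_dual {ℓ : ℕ} (hℓ : 0 < ℓ) {Q : Set V} (hQ : IsCompact Q) (y : V) :
    ∃ ε : ℝ, 0 < ε ∧ (-ε) • y ∈ dualPolygon ℓ Q := by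
  have hl : (0 : ℝ) < ℓ := by exact_mod_cast hℓ
  have hcont : Continuous fun q : V => dotV y q := by unfold dotV; fun_prop
  obtain ⟨M, hM⟩ := hQ.bddAbove_image hcont.continuousOn
  have hM' : ∀ q ∈ Q, dotV y q ≤ |M| + 1 := fun q hq => by
    have h : dotV y q ≤ M := hM ⟨q, hq, rfl⟩
    linarith [le_abs_self M]
  have hpos : 0 < |M| + 1 := by positivity
  refine ⟨ℓ / (|M| + 1), by positivity, (mem_dualPolygon_iff hℓ).2 fun q hq => ?_⟩
  have h := mul_le_mul_of_nonneg_left (hM' q hq) (div_pos hl hpos).le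
  rw [div_mul_cancel₀ _ hpos.ne'] at h
  rw [smul_dotV]
  linarith

/-- **Normal-fan duality for ℓ-reflexive polygons.** -/
theorem normal_fan_duality (ℓ : ℕ) (hℓ : 0 < ℓ) (Q : Set V) (hQ : IsLReflexive ℓ Q)
    (F : Set V) (hF : IsEdge Q F) (η : V) (hη : IsPrimitive η)
    (hFη : F ⊆ {y : V | dotV η y = -(ℓ : ℝ)}) :
    η ∈ Set.extremePoints ℝ (dualPolygon ℓ Q) ∧
    {y : V | ∀ x ∈ dualPolygon ℓ Q, 0 ≤ dotV (x - η) y}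
      = {w : V | ∃ lam : ℝ, 0 ≤ lam ∧ ∃ z ∈ F, w = lam • z} := by
  have hl : (0 : ℝ) < ℓ := by exact_mod_cast hℓ
  obtain ⟨hmin, hFeq⟩ := edge_eq_supporting hQ.zero_mem_interior hF hl hFη
  have hηdual : η ∈ dualPolygon ℓ Q := (mem_dualPolygon_iff hℓ).2 hmin
  obtain ⟨A, hA, -⟩ := hQ.polygon
  have hcomp : IsCompact Q := hA ▸ A.finite_toSet.isCompact_convexHull (𝕜 := ℝ)
  have hconv : Convex ℝ Q := hA ▸ convex_convexHull ℝ _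
  have h0 : (0 : V) ∈ Q := interior_subset hQ.zero_mem_interior
  have hFQ : ∀ y ∈ F, y ∈ Q := fun y hy => by
    rw [hFeq] at hy
    exact hy.1
  obtain ⟨-, a, ha, b, hb, hab⟩ := hF
  constructor
  · rw [mem_extremePoints_iff_left]
    refine ⟨hηdual, ?_⟩
    rintro x₁ hx₁ x₂ hx₂ ⟨s, t, hs, ht, hst, hη'⟩
    rw [mem_dualPolygon_iff hℓ] at hx₁ hx₂
    have tight : ∀ y ∈ F, dotV x₁ y = dotV η y := by
      intro y hy
      have e : dotV η y = -(ℓ : ℝ) := hFη hy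
      have e' : dotV η y = s * dotV x₁ y + t * dotV x₂ y := by
        rw [← hη']
        simp only [dotV, Prod.fst_add, Prod.snd_add, Prod.smul_fst, Prod.smul_snd, smul_eq_mul]
        ring
      have e₁ := hx₁ y (hFQ y hy)
      have e₂ := hx₂ y (hFQ y hy)
      obtain rfl : t = 1 - s := by linarith
      rw [e]
      refine le_antisymm (le_of_mul_le_mul_left ?_ hs) e₁
      nlinarith [mul_le_mul_of_nonneg_left e₂ ht.le]
    exact eq_of_dotV_eq (neg_ne_zero.2 hl.ne') (hFη ha) (hFη hb) hab (tight a ha) (tight b hb)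
  · ext y
    constructor
    · intro hy
      have hy' : ∀ x ∈ dualPolygon ℓ Q, dotV η y ≤ dotV x y := fun x hx => by
        have h := hy x hx
        rw [sub_dotV] at h
        linarith
      by_cases hy0 : y = 0
      · exact ⟨0, le_rfl, a, ha, by simp [hy0]⟩
      have hneg : dotV η y < 0 := by
        obtain ⟨ε, hε, hmem⟩ := exists_neg_smul_mem_dual hℓ hcomp y
        refine (hy' _ hmem).trans_lt ?_
        rw [smul_dotV]
        nlinarith [mul_pos hε (dotV_self_pos hy0)]
      obtain ⟨c, hc, hcη⟩ : ∃ c : ℝ, 0 < c ∧ c * dotV η y = -(ℓ : ℝ) :=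
        ⟨-(ℓ : ℝ) / dotV η y, div_pos_of_neg_of_neg (by linarith) hneg,
          div_mul_cancel₀ _ hneg.ne⟩
      refine ⟨c⁻¹, (inv_pos.2 hc).le, c • y, ?_, by simp [smul_smul, hc.ne']⟩
      rw [hFeq]
      refine ⟨mem_of_dual_le hℓ hconv hcomp.isClosed h0 fun x hx => ?_, by rw [dotV_smul, hcη]⟩
      rw [dotV_smul, ← hcη]
      exact mul_le_mul_of_nonneg_left (hy' x hx) hc.le
    · rintro ⟨c, hc, z, hz, rfl⟩ x hx
      have h1 := (mem_dualPolygon_iff hℓ).1 hx z (hFQ z hz)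
      have h2 : dotV η z = -(ℓ : ℝ) := hFη hz
      rw [dotV_smul, sub_dotV]
      exact mul_nonneg hc (by linarith)
end
end

section
/- An infinite family of ℓ-reflexive hexagons: Let ℓ be a positive odd integer and let Q := conv{(1,0), (−1,ℓ), (−2,ℓ), (−1,0), (1,−ℓ), (2,−ℓ)} ⊆ ℝ². Then Q is an ℓ-reflexive polygon with respect to ℤ², its dual is Q* = ℓ·Q° = conv{(−ℓ,−2), (0,−1), (ℓ,1), (ℓ,2), (0,1), (−ℓ,−1)}, and #(frontier Q ∩ ℤ²) = #(frontier Q* ∩ ℤ²) = 6. -/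
/-!
The hexagon `Q` is the image of the standard hexagon `|u| ≤ 1, |t| ≤ 1, |u + t| ≤ 1` under
`(u, t) ↦ (u - t, ℓ t)`. Hence it is cut out by the six inequalities `⟨g, y⟩ ≥ -ℓ` with
`g ∈ {±(ℓ, 2), ±(0, 1), ±(ℓ, 1)}` (`mem_hexQ_iff`), and its interior by the strict inequalities
(`mem_interior_hexQ_iff`). The oddness of `ℓ` makes the normals `±(ℓ, 2)` and the vertices
`±(2, -ℓ)` primitive.

An edge `F` is the argmin set of a functional `η`. The midpoint of two distinct points of `F` is
not interior to `Q`, so some `⟨g, ·⟩` equals `-ℓ` there, hence at both points; as `g` and `η` are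
both orthogonal to the direction of `F`, all of `F` lies on `⟨g, ·⟩ = -ℓ`.

A lattice point `(m, n)` of the boundary satisfies one of `ℓ m + 2 n = ±ℓ`, `n = ±ℓ`,
`ℓ m + n = ±ℓ`, so `ℓ ∣ n` (again because `ℓ` is odd), which leaves only the six vertices.

Finally, `ℓ Q°` is the image of `Q` under the rotation `(a, b) ↦ (-b, a)`, which preserves `ℤ²`;
the claims on the dual follow from those on `Q`.
-/

open Set

noncomputable section

/-- The hexagon `conv{(1,0), (−1,ℓ), (−2,ℓ), (−1,0), (1,−ℓ), (2,−ℓ)}`. -/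
def hexQ (ℓ : ℕ) : Set V :=
  convexHull ℝ {(1, 0), (-1, (ℓ : ℝ)), (-2, (ℓ : ℝ)), (-1, 0), (1, -(ℓ : ℝ)), (2, -(ℓ : ℝ))}

/-! ### Vertices and edge normals -/

/-- The vertices of the hexagon `hexQ ℓ`. -/
def hexVerts (ℓ : ℕ) : Set V :=
  {(1, 0), (-1, (ℓ : ℝ)), (-2, (ℓ : ℝ)), (-1, 0), (1, -(ℓ : ℝ)), (2, -(ℓ : ℝ))}

/-- The inner normals of the edges of `hexQ ℓ`, scaled so that each edge lies on
`⟨g, ·⟩ = -ℓ`. They are also the vertices of the dual polygon. -/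
def hexNormals (ℓ : ℕ) : Set V :=
  {(-(ℓ : ℝ), -2), (0, -1), ((ℓ : ℝ), 1), ((ℓ : ℝ), 2), (0, 1), (-(ℓ : ℝ), -1)}

lemma finite_hexVerts (ℓ : ℕ) : (hexVerts ℓ).Finite := by
  unfold hexVerts; exact toFinite _

lemma continuous_dotV (g : V) : Continuous (dotV g) := by
  unfold dotV; fun_prop

lemma convex_halfPlane (g : V) (c : ℝ) : Convex ℝ {p : V | c ≤ dotV g p} := by
  intro x hx y hy a b ha hb hab
  simp only [mem_ofPred_eq, dotV, Prod.fst_add, Prod.snd_add, Prod.smul_fst, Prod.smul_snd,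
    smul_eq_mul] at *
  obtain rfl : b = 1 - a := by linarith
  nlinarith

/-! ### Primitive points -/

/-- Coprime coordinates give a primitive point: if `t • (a, b)` is a lattice point, a Bézout
relation shows that `t` is an integer. -/
lemma isPrimitive_of_isCoprime {a b : ℤ} (h : IsCoprime a b) :
    IsPrimitive ((a : ℝ), (b : ℝ)) := by
  obtain ⟨r, s, hrs⟩ := h
  refine ⟨⟨(a, b), rfl⟩, ?_, ?_⟩
  · intro h0
    simp only [Prod.mk_eq_zero, Int.cast_eq_zero] at h0
    rw [h0.1, h0.2] at hrs
    simp at hrs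
  · ext p
    simp only [mem_inter_iff, mem_insert_iff, mem_singleton_iff]
    constructor
    · rintro ⟨⟨c, t, hc, ht, hct, rfl⟩, ⟨⟨m, n⟩, hmn⟩⟩
      have h1 : t * a = m := by simpa using congrArg Prod.fst hmn
      have h2 : t * b = n := by simpa using congrArg Prod.snd hmn
      have hrs' : (r : ℝ) * a + s * b = 1 := by exact_mod_cast hrs
      have ht' : t = ((r * m + s * n : ℤ) : ℝ) := by
        push_cast
        rw [← h1, ← h2]
        linear_combination -t * hrs'
      generalize r * m + s * n = k at ht'
      subst ht'
      have hk0 : 0 ≤ k := by exact_mod_cast ht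
      have hk1 : k ≤ 1 := by
        have : (k : ℝ) ≤ 1 := by linarith
        exact_mod_cast this
      interval_cases k
      · left; simp
      · right; simp
    · rintro (rfl | rfl)
      · exact ⟨left_mem_segment _ _ _, ⟨(0, 0), by ext <;> simp⟩⟩
      · exact ⟨right_mem_segment _ _ _, ⟨(a, b), rfl⟩⟩

lemma isCoprime_two_of_odd {ℓ : ℕ} (hℓ : Odd ℓ) : IsCoprime (ℓ : ℤ) 2 := by
  obtain ⟨k, rfl⟩ := hℓ
  exact ⟨1, -k, by push_cast; ring⟩

lemma isPrimitive_hexVerts {ℓ : ℕ} (hℓ : Odd ℓ) {v : V} (hv : v ∈ hexVerts ℓ) :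
    IsPrimitive v := by
  have h2 := isCoprime_two_of_odd hℓ
  rcases hv with rfl | rfl | rfl | rfl | rfl | rfl
  · exact_mod_cast isPrimitive_of_isCoprime (a := 1) (b := 0) isCoprime_one_left
  · exact_mod_cast isPrimitive_of_isCoprime (a := -1) (b := ℓ) isCoprime_one_left.neg_left
  · exact_mod_cast isPrimitive_of_isCoprime (a := -2) (b := ℓ) h2.symm.neg_left
  · exact_mod_cast isPrimitive_of_isCoprime (a := -1) (b := 0) isCoprime_one_left.neg_left
  · exact_mod_cast isPrimitive_of_isCoprime (a := 1) (b := -ℓ) isCoprime_one_left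
  · exact_mod_cast isPrimitive_of_isCoprime (a := 2) (b := -ℓ) h2.symm.neg_right

lemma isPrimitive_hexNormals {ℓ : ℕ} (hℓ : Odd ℓ) {g : V} (hg : g ∈ hexNormals ℓ) :
    IsPrimitive g := by
  have h2 := isCoprime_two_of_odd hℓ
  rcases hg with rfl | rfl | rfl | rfl | rfl | rfl
  · exact_mod_cast isPrimitive_of_isCoprime (a := -ℓ) (b := -2) h2.neg_neg
  · exact_mod_cast isPrimitive_of_isCoprime (a := 0) (b := -1) isCoprime_one_right.neg_right
  · exact_mod_cast isPrimitive_of_isCoprime (a := ℓ) (b := 1) isCoprime_one_right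
  · exact_mod_cast isPrimitive_of_isCoprime (a := ℓ) (b := 2) h2
  · exact_mod_cast isPrimitive_of_isCoprime (a := 0) (b := 1) isCoprime_one_right
  · exact_mod_cast isPrimitive_of_isCoprime (a := -ℓ) (b := -1) isCoprime_one_right.neg_right

/-! ### Facet description, interior and frontier of the hexagon -/

lemma forall_mem_hexNormals {ℓ : ℕ} {P : V → Prop} :
    (∀ g ∈ hexNormals ℓ, P g) ↔ P (-(ℓ : ℝ), -2) ∧ P (0, -1) ∧ P ((ℓ : ℝ), 1) ∧
      P ((ℓ : ℝ), 2) ∧ P (0, 1) ∧ P (-(ℓ : ℝ), -1) := by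
  simp [hexNormals]

/-- A point of the triangle with vertices `0, v, w` lies in every convex set containing them. -/
lemma Convex.smul_add_smul_mem {s : Set V} (hs : Convex ℝ s) (h0 : (0 : V) ∈ s) {v w : V}
    (hv : v ∈ s) (hw : w ∈ s) {a b : ℝ} (ha : 0 ≤ a) (hb : 0 ≤ b) (hab : a + b ≤ 1) :
    a • v + b • w ∈ s := by
  rcases (add_nonneg ha hb).eq_or_lt with h | h
  · obtain rfl : a = 0 := by linarith
    obtain rfl : b = 0 := by linarith
    simpa using h0
  · have hm := hs hv hw (div_nonneg ha h.le) (div_nonneg hb h.le)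
      (by rw [← add_div, div_self h.ne'])
    have := hs.smul_mem_of_zero_mem h0 hm ⟨h.le, hab⟩
    rwa [smul_add, smul_smul, smul_smul, mul_div_cancel₀ _ h.ne', mul_div_cancel₀ _ h.ne'] at this

/-- The facet description of the hexagon. -/
lemma mem_hexQ_iff {ℓ : ℕ} (hℓ : 0 < ℓ) (p : V) :
    p ∈ hexQ ℓ ↔ ∀ g ∈ hexNormals ℓ, -(ℓ : ℝ) ≤ dotV g p := by
  have hL : (0 : ℝ) < ℓ := by exact_mod_cast hℓ
  constructor
  · intro hp g hg
    refine convexHull_min ?_ (convex_halfPlane g (-(ℓ : ℝ))) hp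
    intro v hv
    rcases hg with rfl | rfl | rfl | rfl | rfl | rfl <;>
    rcases hv with rfl | rfl | rfl | rfl | rfl | rfl <;>
    · simp only [mem_ofPred_eq, dotV]
      linarith
  · intro h
    rw [forall_mem_hexNormals] at h
    obtain ⟨x, y⟩ := p
    -- In the coordinates `x = u - t`, `y = ℓ t` the constraints are those of the standard hexagon.
    obtain ⟨t, rfl⟩ : ∃ t, y = ℓ * t := ⟨y / ℓ, by field_simp⟩
    obtain ⟨u, rfl⟩ : ∃ u, x = u - t := ⟨x + t, by ring⟩
    simp only [dotV] at h
    obtain ⟨h1, h2, h3, h4, h5, h6⟩ := h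
    replace h1 : u + t ≤ 1 := by nlinarith
    replace h2 : t ≤ 1 := by nlinarith
    replace h3 : -1 ≤ u := by nlinarith
    replace h4 : -1 ≤ u + t := by nlinarith
    replace h5 : -1 ≤ t := by nlinarith
    replace h6 : u ≤ 1 := by nlinarith
    have hc : Convex ℝ (hexQ ℓ) := convex_convexHull _ _
    have hv : hexVerts ℓ ⊆ hexQ ℓ := subset_convexHull _ _
    have v1 : ((1, 0) : V) ∈ hexQ ℓ := hv (by simp [hexVerts])
    have v2 : ((-1, (ℓ : ℝ)) : V) ∈ hexQ ℓ := hv (by simp [hexVerts])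
    have v3 : ((-2, (ℓ : ℝ)) : V) ∈ hexQ ℓ := hv (by simp [hexVerts])
    have v4 : ((-1, 0) : V) ∈ hexQ ℓ := hv (by simp [hexVerts])
    have v5 : ((1, -(ℓ : ℝ)) : V) ∈ hexQ ℓ := hv (by simp [hexVerts])
    have v6 : ((2, -(ℓ : ℝ)) : V) ∈ hexQ ℓ := hv (by simp [hexVerts])
    have h0 : (0 : V) ∈ hexQ ℓ := by
      have := hc v1 v4 (by norm_num : (0 : ℝ) ≤ 1 / 2) (by norm_num : (0 : ℝ) ≤ 1 / 2)
        (by norm_num)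
      convert this using 1
      ext <;> simp
    -- The six cones over the edges cover the plane.
    rcases le_total 0 u with hu | hu <;> rcases le_total 0 t with ht | ht
    · convert hc.smul_add_smul_mem h0 v1 v2 hu ht h1 using 1
      ext <;> simp <;> ring
    · rcases le_total 0 (u + t) with hut | hut
      · convert hc.smul_add_smul_mem h0 v1 v6 hut (neg_nonneg.2 ht) (by linarith) using 1
        ext <;> simp <;> ring
      · convert hc.smul_add_smul_mem h0 v6 v5 hu (neg_nonneg.2 hut) (by linarith) using 1
        ext <;> simp <;> ring
    · rcases le_total 0 (u + t) with hut | hut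
      · convert hc.smul_add_smul_mem h0 v2 v3 hut (neg_nonneg.2 hu) (by linarith) using 1
        ext <;> simp <;> ring
      · convert hc.smul_add_smul_mem h0 v3 v4 ht (neg_nonneg.2 hut) (by linarith) using 1
        ext <;> simp <;> ring
    · convert hc.smul_add_smul_mem h0 v4 v5 (neg_nonneg.2 hu) (neg_nonneg.2 ht) (by linarith)
        using 1
      ext <;> simp <;> ring

lemma exists_pos_add_smul_mem {s : Set V} {p : V} (hp : p ∈ interior s) (v : V) :
    ∃ ε : ℝ, 0 < ε ∧ p + ε • v ∈ s := by
  have hc : Continuous fun ε : ℝ => p + ε • v := by fun_prop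
  have h : ∀ᶠ ε in nhds (0 : ℝ), p + ε • v ∈ s :=
    hc.continuousAt (by simpa using mem_interior_iff_mem_nhds.1 hp)
  obtain ⟨ε, h1, h2⟩ := ((h.filter_mono nhdsWithin_le_nhds).and
    (self_mem_nhdsWithin : Ioi (0 : ℝ) ∈ nhdsWithin 0 (Ioi 0))).exists
  exact ⟨ε, h2, h1⟩

lemma mem_interior_hexQ_iff {ℓ : ℕ} (hℓ : 0 < ℓ) (p : V) :
    p ∈ interior (hexQ ℓ) ↔ ∀ g ∈ hexNormals ℓ, -(ℓ : ℝ) < dotV g p := by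
  have hL : (0 : ℝ) < ℓ := by exact_mod_cast hℓ
  constructor
  · intro hp g hg
    refine lt_of_le_of_ne ((mem_hexQ_iff hℓ p).1 (interior_subset hp) g hg) fun heq => ?_
    -- Moving `p` outwards from the origin violates the inequality given by `g`.
    obtain ⟨ε, hε, hm⟩ := exists_pos_add_smul_mem hp p
    have h1 := (mem_hexQ_iff hℓ _).1 hm g hg
    simp only [dotV, Prod.fst_add, Prod.snd_add, Prod.smul_fst, Prod.smul_snd,
      smul_eq_mul] at h1 heq
    nlinarith [mul_pos hε hL]
  · intro h
    have hfin : (hexNormals ℓ).Finite := by unfold hexNormals; exact toFinite _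
    have ho : IsOpen (⋂ g ∈ hexNormals ℓ, {q : V | -(ℓ : ℝ) < dotV g q}) :=
      hfin.isOpen_biInter fun g _ => isOpen_lt continuous_const (continuous_dotV g)
    refine interior_maximal ?_ ho (by simpa using h)
    intro q hq
    simp only [mem_iInter, mem_ofPred_eq] at hq
    exact (mem_hexQ_iff hℓ q).2 fun g hg => (hq g hg).le

lemma zero_mem_interior_hexQ {ℓ : ℕ} (hℓ : 0 < ℓ) : (0 : V) ∈ interior (hexQ ℓ) := by
  rw [mem_interior_hexQ_iff hℓ]
  intro g _
  simpa [dotV] using hℓ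

lemma mem_frontier_hexQ_iff {ℓ : ℕ} (hℓ : 0 < ℓ) (p : V) :
    p ∈ frontier (hexQ ℓ) ↔ p ∈ hexQ ℓ ∧ ∃ g ∈ hexNormals ℓ, dotV g p = -(ℓ : ℝ) := by
  have hclosed : IsClosed (hexQ ℓ) :=
    (finite_hexVerts ℓ).isClosed_convexHull ℝ
  rw [hclosed.frontier_eq, mem_sdiff, mem_interior_hexQ_iff hℓ]
  refine and_congr_right fun hp => ?_
  push Not
  refine exists_congr fun g => and_congr_right fun hg => ?_
  have := (mem_hexQ_iff hℓ p).1 hp g hg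
  exact ⟨fun h => le_antisymm h this, le_of_eq⟩

/-! ### Edges and reflexivity -/

/-- In the plane, if `η ≠ 0` is orthogonal to `d` and `e`, and `d ≠ 0`, then everything
orthogonal to `d` is orthogonal to `e`. -/
lemma dotV_eq_zero_of_orthogonal {η d e g : V} (hη : η ≠ 0) (hd : d ≠ 0) (h1 : dotV η d = 0)
    (h2 : dotV η e = 0) (h3 : dotV g d = 0) : dotV g e = 0 := by
  simp only [dotV] at *
  have hdet : d.1 * e.2 - d.2 * e.1 = 0 := by
    by_contra hne
    refine hη (Prod.ext ?_ ?_)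
    · exact (mul_eq_zero.1 (show η.1 * (d.1 * e.2 - d.2 * e.1) = 0 by
        linear_combination e.2 * h1 - d.2 * h2)).resolve_right hne
    · exact (mul_eq_zero.1 (show η.2 * (d.1 * e.2 - d.2 * e.1) = 0 by
        linear_combination d.1 * h2 - e.1 * h1)).resolve_right hne
  by_contra hne
  refine hd (Prod.ext ?_ ?_)
  · exact (mul_eq_zero.1 (show d.1 * (g.1 * e.1 + g.2 * e.2) = 0 by
      linear_combination e.1 * h3 + g.2 * hdet)).resolve_right hne
  · exact (mul_eq_zero.1 (show d.2 * (g.1 * e.1 + g.2 * e.2) = 0 by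
      linear_combination e.2 * h3 - g.1 * hdet)).resolve_right hne

lemma exists_normal_of_isEdge {ℓ : ℕ} (hℓ : 0 < ℓ) {F : Set V} (hF : IsEdge (hexQ ℓ) F) :
    ∃ g ∈ hexNormals ℓ, F ⊆ {y : V | dotV g y = -(ℓ : ℝ)} := by
  obtain ⟨⟨η, hη, rfl⟩, y₁, ⟨hy₁, hmin₁⟩, y₂, ⟨hy₂, hmin₂⟩, hne⟩ := hF
  have heq : dotV η y₁ = dotV η y₂ := le_antisymm (hmin₁ _ hy₂) (hmin₂ _ hy₁)
  have hz : (1 / 2 : ℝ) • y₁ + (1 / 2 : ℝ) • y₂ ∉ interior (hexQ ℓ) := by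
    intro hint
    -- At an interior point, moving along `-η` decreases `⟨η, ·⟩`.
    obtain ⟨ε, hε, hm⟩ := exists_pos_add_smul_mem hint (-η)
    have h1 := hmin₁ _ hm
    have hpos : 0 < η.1 * η.1 + η.2 * η.2 := by
      by_contra hle
      exact hη (Prod.ext (by simp; nlinarith [mul_self_nonneg η.1, mul_self_nonneg η.2])
        (by simp; nlinarith [mul_self_nonneg η.1, mul_self_nonneg η.2]))
    simp only [dotV, Prod.fst_add, Prod.snd_add, Prod.smul_fst, Prod.smul_snd, Prod.fst_neg,
      Prod.snd_neg, smul_eq_mul] at h1 heq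
    nlinarith [mul_pos hε hpos]
  rw [mem_interior_hexQ_iff hℓ] at hz
  push Not at hz
  obtain ⟨g, hg, hgz⟩ := hz
  have hg₁ := (mem_hexQ_iff hℓ y₁).1 hy₁ g hg
  have hg₂ := (mem_hexQ_iff hℓ y₂).1 hy₂ g hg
  refine ⟨g, hg, ?_⟩
  rintro y ⟨hy, hmin⟩
  have heq' : dotV η y = dotV η y₁ := le_antisymm (hmin _ hy₁) (hmin₁ _ hy)
  have hlin : ∀ a b c : V, dotV a (b - c) = dotV a b - dotV a c := by
    intro a b c; simp only [dotV, Prod.fst_sub, Prod.snd_sub]; ring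
  have hmid : dotV g ((1 / 2 : ℝ) • y₁ + (1 / 2 : ℝ) • y₂) =
      (1 / 2) * dotV g y₁ + (1 / 2) * dotV g y₂ := by
    simp only [dotV, Prod.fst_add, Prod.snd_add, Prod.smul_fst, Prod.smul_snd, smul_eq_mul]; ring
  rw [hmid] at hgz
  have key := dotV_eq_zero_of_orthogonal (g := g) (d := y₂ - y₁) (e := y - y₁) hη
    (sub_ne_zero.2 hne.symm) (by rw [hlin]; linarith) (by rw [hlin]; linarith)
    (by rw [hlin]; linarith)
  rw [hlin] at key
  simp only [mem_ofPred_eq]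
  linarith

lemma isLReflexive_hexQ {ℓ : ℕ} (hℓ : Odd ℓ) : IsLReflexive ℓ (hexQ ℓ) where
  polygon := by
    have hfin := finite_hexVerts ℓ
    refine ⟨hfin.toFinset, by rw [hfin.coe_toFinset]; rfl, ?_⟩
    rw [hfin.coe_toFinset]
    exact interior_convexHull_nonempty_iff_affineSpan_eq_top.1 ⟨0, zero_mem_interior_hexQ hℓ.pos⟩
  vertices_primitive _ hv := isPrimitive_hexVerts hℓ (extremePoints_convexHull_subset hv)
  zero_mem_interior := zero_mem_interior_hexQ hℓ.pos
  edge_cond F hF := by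
    obtain ⟨g, hg, h⟩ := exists_normal_of_isEdge hℓ.pos hF
    exact ⟨g, isPrimitive_hexNormals hℓ hg, h⟩

/-! ### Lattice points on the boundary -/

lemma hexVerts_subset_frontier {ℓ : ℕ} (hℓ : 0 < ℓ) : hexVerts ℓ ⊆ frontier (hexQ ℓ) := by
  intro v hv
  refine (mem_frontier_hexQ_iff hℓ v).2 ⟨subset_convexHull _ _ hv, ?_⟩
  rcases hv with rfl | rfl | rfl | rfl | rfl | rfl
  · exact ⟨(-(ℓ : ℝ), -2), by simp [hexNormals], by simp [dotV]⟩
  · exact ⟨(0, -1), by simp [hexNormals], by simp [dotV]⟩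
  · exact ⟨(0, -1), by simp [hexNormals], by simp [dotV]⟩
  · exact ⟨((ℓ : ℝ), 1), by simp [hexNormals], by simp [dotV]⟩
  · exact ⟨(0, 1), by simp [hexNormals], by simp [dotV]⟩
  · exact ⟨(0, 1), by simp [hexNormals], by simp [dotV]⟩

/-- The only lattice points on the boundary of the hexagon are its vertices. -/
lemma frontier_hexQ_inter_latticePts {ℓ : ℕ} (hℓ : Odd ℓ) :
    frontier (hexQ ℓ) ∩ latticePts = hexVerts ℓ := by
  refine Subset.antisymm ?_ fun v hv =>
    ⟨hexVerts_subset_frontier hℓ.pos hv, (isPrimitive_hexVerts hℓ hv).1⟩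
  rintro _ ⟨hp, ⟨⟨m, n⟩, rfl⟩⟩
  obtain ⟨hQ, g, hg, hgp⟩ := (mem_frontier_hexQ_iff hℓ.pos _).1 hp
  have hdvd : (ℓ : ℤ) ∣ n := by
    have h2 := isCoprime_two_of_odd hℓ
    rcases hg with rfl | rfl | rfl | rfl | rfl | rfl <;> simp only [dotV] at hgp
    · have h : -(ℓ : ℤ) * m + -2 * n = -ℓ := by exact_mod_cast hgp
      exact h2.dvd_of_dvd_mul_left ⟨1 - m, by linarith⟩
    · have h : 0 * m + -1 * n = -(ℓ : ℤ) := by exact_mod_cast hgp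
      exact ⟨1, by linarith⟩
    · have h : (ℓ : ℤ) * m + 1 * n = -ℓ := by exact_mod_cast hgp
      exact ⟨-1 - m, by linarith⟩
    · have h : (ℓ : ℤ) * m + 2 * n = -ℓ := by exact_mod_cast hgp
      exact h2.dvd_of_dvd_mul_left ⟨-1 - m, by linarith⟩
    · have h : 0 * m + 1 * n = -(ℓ : ℤ) := by exact_mod_cast hgp
      exact ⟨-1, by linarith⟩
    · have h : -(ℓ : ℤ) * m + -1 * n = -ℓ := by exact_mod_cast hgp
      exact ⟨1 - m, by linarith⟩
  obtain ⟨k, rfl⟩ := hdvd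
  have hL : (0 : ℤ) < ℓ := by exact_mod_cast hℓ.pos
  have hQ' := forall_mem_hexNormals.1 ((mem_hexQ_iff hℓ.pos _).1 hQ)
  simp only [dotV] at hQ'
  obtain ⟨h1, h2, h3, h4, h5, h6⟩ := hQ'
  norm_cast at h1 h2 h3 h4 h5 h6
  push_cast at h1 h2 h3 h4 h5 h6
  replace h1 : m + 2 * k ≤ 1 := by nlinarith
  replace h2 : k ≤ 1 := by nlinarith
  replace h3 : -1 ≤ m + k := by nlinarith
  replace h4 : -1 ≤ m + 2 * k := by nlinarith
  replace h5 : -1 ≤ k := by nlinarith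
  replace h6 : m + k ≤ 1 := by nlinarith
  have hne : ¬ (m = 0 ∧ k = 0) := by
    rintro ⟨rfl, rfl⟩
    have : (ℓ : ℝ) ≠ 0 := by exact_mod_cast hL.ne'
    simp [dotV, this] at hgp
  have hcases : (m = 1 ∧ k = 0) ∨ (m = -1 ∧ k = 1) ∨ (m = -2 ∧ k = 1) ∨ (m = -1 ∧ k = 0) ∨
      (m = 1 ∧ k = -1) ∨ (m = 2 ∧ k = -1) := by omega
  rcases hcases with ⟨rfl, rfl⟩ | ⟨rfl, rfl⟩ | ⟨rfl, rfl⟩ | ⟨rfl, rfl⟩ | ⟨rfl, rfl⟩ | ⟨rfl, rfl⟩ <;>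
    simp [hexVerts]

lemma ncard_hexVerts {ℓ : ℕ} (hℓ : 0 < ℓ) : (hexVerts ℓ).ncard = 6 := by
  have hL : (0 : ℝ) < ℓ := by exact_mod_cast hℓ
  have h1 : (ℓ : ℝ) ≠ 0 := hL.ne'
  unfold hexVerts
  repeat rw [ncard_insert_of_notMem]
  · rw [ncard_singleton]
  all_goals norm_num [h1, h1.symm]

/-! ### The dual hexagon -/

/-- The rotation `(a, b) ↦ (-b, a)`, which maps `hexQ ℓ` to its dual. -/
def rot : V ≃ₗ[ℝ] V where
  toFun p := (-p.2, p.1)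
  invFun p := (p.2, -p.1)
  map_add' p q := by ext <;> simp [add_comm]
  map_smul' c p := by ext <;> simp
  left_inv p := by simp
  right_inv p := by simp

lemma rot_apply (p : V) : rot p = (-p.2, p.1) := rfl

lemma rot_image_hexQ (ℓ : ℕ) :
    rot '' hexQ ℓ = convexHull ℝ (hexNormals ℓ) := by
  unfold hexQ
  rw [← LinearEquiv.coe_coe, LinearMap.image_convexHull]
  congr 1
  simp only [image_insert_eq, image_singleton, LinearEquiv.coe_coe, rot_apply, neg_zero, neg_neg]
  unfold hexNormals
  ext p
  simp only [mem_insert_iff, mem_singleton_iff]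
  tauto

/-- The inequalities `⟨x, v⟩ ≥ -ℓ` over the vertices `v` of `hexQ ℓ` are the facet inequalities
of `hexQ ℓ` at the rotated point, because the edge normals are the rotated vertices. -/
lemma dualPolygon_hexQ {ℓ : ℕ} (hℓ : 0 < ℓ) : dualPolygon ℓ (hexQ ℓ) = rot '' hexQ ℓ := by
  have hL : (0 : ℝ) < ℓ := by exact_mod_cast hℓ
  have hpolar : ∀ x : V, x ∈ polarPolygon (hexQ ℓ) ↔ ∀ v ∈ hexVerts ℓ, -1 ≤ dotV x v := fun x =>
    ⟨fun h v hv => h v (subset_convexHull _ _ hv),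
      fun h y hy => convexHull_min (fun v hv => h v hv) (convex_halfPlane x (-1)) hy⟩
  have hscale : ∀ x : V, rot.symm ((ℓ : ℝ) • x) ∈ hexQ ℓ ↔ x ∈ polarPolygon (hexQ ℓ) := by
    intro x
    have hr : rot.symm ((ℓ : ℝ) • x) = (ℓ * x.2, -(ℓ * x.1)) := rfl
    have hmul : ∀ a : ℝ, -(ℓ : ℝ) ≤ ℓ * a ↔ -1 ≤ a := fun a => by
      rw [← mul_le_mul_iff_right₀ hL (b := -1), mul_neg_one]
    rw [hpolar, mem_hexQ_iff hℓ, forall_mem_hexNormals, hr]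
    simp only [hexVerts, forall_mem_insert, mem_singleton_iff, forall_eq, ← hmul]
    simp only [dotV]
    ring_nf
    tauto
  ext z
  rw [← LinearEquiv.coe_toEquiv, Equiv.image_eq_preimage_symm]
  constructor
  · rintro ⟨x, hx, rfl⟩
    exact (hscale x).2 hx
  · intro hz
    have hzz : (ℓ : ℝ) • ((ℓ : ℝ)⁻¹ • z) = z := smul_inv_smul₀ hL.ne' z
    refine ⟨(ℓ : ℝ)⁻¹ • z, (hscale _).1 ?_, hzz⟩
    rw [hzz]
    exact hz

lemma rot_image_latticePts : rot '' latticePts = latticePts := by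
  ext p
  constructor
  · rintro ⟨_, ⟨⟨m, n⟩, rfl⟩, rfl⟩
    exact ⟨(-n, m), by simp [rot_apply]⟩
  · rintro ⟨⟨m, n⟩, rfl⟩
    exact ⟨(n, -m), ⟨(n, -m), by simp⟩, by simp [rot_apply]⟩

lemma rot_image_frontier (s : Set V) : frontier (rot '' s) = rot '' frontier s :=
  (rot.toContinuousLinearEquiv.toHomeomorph.image_frontier s).symm

/-- **An infinite family of ℓ-reflexive hexagons.** -/
theorem hexagon_family (ℓ : ℕ) (hℓ : Odd ℓ) :
    IsLReflexive ℓ (hexQ ℓ) ∧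
    dualPolygon ℓ (hexQ ℓ) =
      convexHull ℝ {(-(ℓ : ℝ), -2), (0, -1), ((ℓ : ℝ), 1), ((ℓ : ℝ), 2), (0, 1),
        (-(ℓ : ℝ), -1)} ∧
    (frontier (hexQ ℓ) ∩ latticePts).ncard = 6 ∧
    (frontier (dualPolygon ℓ (hexQ ℓ)) ∩ latticePts).ncard = 6 := by
  refine ⟨isLReflexive_hexQ hℓ, ?_, ?_, ?_⟩
  · rw [dualPolygon_hexQ hℓ.pos, rot_image_hexQ]
    rfl
  · rw [frontier_hexQ_inter_latticePts hℓ, ncard_hexVerts hℓ.pos]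
  · rw [dualPolygon_hexQ hℓ.pos, rot_image_frontier, ← rot_image_latticePts,
      ← image_inter rot.injective, ncard_image_of_injective _ rot.injective,
      frontier_hexQ_inter_latticePts hℓ, ncard_hexVerts hℓ.pos]
end
end

section
/- Determinantal identity for ℓ-reflexive polygons: Let ℓ be a positive integer and Q ⊆ ℝ² an ℓ-reflexive polygon with respect to ℤ², with vertices n₁, …, n_ν ∈ ℤ² listed in anticlockwise order: the extreme points of Q are exactly n₁, …, n_ν, pairwise distinct, and, with indices read modulo ν, det(n_i, n_{i+1}) > 0 and conv{n_i, n_{i+1}} is an edge of Q for every i. Set q_i := det(n_i, n_{i+1}). Then, as an identity of rational numbers, Σ_{i=1}^{ν} (q_i/ℓ + 2ℓ/q_i) = Σ_{i=1}^{ν} ℓ·det(n_i, n_{i+2})/(q_i·q_{i+1}) + 12. -/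
/-!
Write `n (i+1) = n i + e i • d i` with `d i` an integer vector along the edge. The edge lies at
height `ℓ`, so `det (n i, d i) = ℓ` and `q i = ℓ * e i` (`edge_direction`). Since `d (i+1) - d i` has
determinant zero with the primitive vector `n (i+1)`, it equals `k i • n (i+1)` for an integer `k i`.
Expanding `det (n i, n (i+2))` in these terms, the identity becomes `∑ (e i - k i) = 12`. This is
the twelve theorem for reflexive polygons, in the sublattice of index `ℓ` spanned by `n 0, d 0`,
which contains every `n i` and `d i` (`twelve_index`).

The pairs `(n i, d i)` are then matrices of determinant one, joined by shears. The Rademacher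
function `rad`, built from Dedekind sums, changes by `e` under the shear `m ↦ m + e • d`, by `-k`
under `d ↦ d + k • m`, and by an extra `-12` for each turn around the origin (`rad_shear_left`,
`rad_shear_right`); the first of these rules is Dedekind reciprocity. Summing around the polygon the
values of `rad` cancel, which leaves twelve times the number of crossings of the positive
horizontal axis. There is exactly one: at least one since an anticlockwise closed path cannot
stay in a half-plane (`exists_up`), at most one by convexity (`up_unique`).
-/


open Set

noncomputable section

/-- The real embedding of an integer point. -/
def realVec (p : ℤ × ℤ) : V := ((p.1 : ℝ), (p.2 : ℝ))

/-- `det(a,b) = a₁b₂ − a₂b₁` for integer points. -/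
def detZ (a b : ℤ × ℤ) : ℤ := a.1 * b.2 - a.2 * b.1

/-! ### Dedekind sums -/

/-- Twelve times the Dedekind sum `s(a, c)` for coprime `a, c` with `c > 0`, defined by the
Euclidean algorithm: it depends only on `a` mod `c`, vanishes when `c ∣ a` (so, by coprimality,
`c = 1`), and otherwise is forced by the reciprocity law applied to the residue of `a`.
The value at `c = 0` is junk. -/
def ded (a : ℤ) (c : ℕ) : ℚ :=
  if h : c = 0 ∨ (a % (c : ℤ)).toNat = 0 then 0
  else
    (((a % (c : ℤ)).toNat : ℚ) ^ 2 + (c : ℚ) ^ 2 + 1) / (((a % (c : ℤ)).toNat : ℚ) * c) - 3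
      - ded c (a % (c : ℤ)).toNat
termination_by c
decreasing_by
  have h1 : (0 : ℤ) < c := by omega
  have := Int.emod_lt_of_pos a h1
  omega

theorem ded_one (a : ℤ) : ded a 1 = 0 := by
  rw [ded]; simp

theorem ded_congr {a b : ℤ} {c : ℕ} (h : a % (c : ℤ) = b % (c : ℤ)) : ded a c = ded b c := by
  rw [ded.eq_1 a, ded.eq_1 b, h]

theorem ded_recip_of_lt {a c : ℕ} (ha : 0 < a) (hac : a < c) :
    ded a c + ded c a = ((a : ℚ) ^ 2 + (c : ℚ) ^ 2 + 1) / (a * c) - 3 := by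
  have h1 : ((a : ℤ) % (c : ℤ)).toNat = a := by
    rw [Int.emod_eq_of_lt (by omega) (by omega)]; simp
  rw [ded, h1, dif_neg (by omega)]
  ring

theorem ded_recip {a c : ℕ} (ha : 0 < a) (hc : 0 < c) (h : Nat.Coprime a c) :
    ded a c + ded c a = ((a : ℚ) ^ 2 + (c : ℚ) ^ 2 + 1) / (a * c) - 3 := by
  rcases lt_trichotomy a c with hlt | rfl | hlt
  · exact ded_recip_of_lt ha hlt
  · have : a = 1 := by simpa using h
    subst this
    simp [ded_one]; norm_num
  · rw [add_comm, ded_recip_of_lt hc hlt]; ring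

/-- Oddness follows from periodicity and reciprocity alone: with `r` the residue of `a` and
`c = r + s`, reciprocity for the three pairs `(r, c)`, `(s, c)`, `(r, s)` determines the sum of
the values at `r` and at `s ≡ -r`. -/
theorem ded_neg {a : ℤ} {c : ℕ} (hc : 0 < c) (h : IsCoprime a (c : ℤ)) :
    ded (-a) c = - ded a c := by
  have hc' : (0 : ℤ) < c := by omega
  obtain ⟨r, hr⟩ : ∃ r : ℕ, (r : ℤ) = a % c :=
    ⟨(a % c).toNat, Int.toNat_of_nonneg (Int.emod_nonneg _ hc'.ne')⟩
  have hlt : (r : ℤ) < c := hr ▸ Int.emod_lt_of_pos a hc'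
  rcases Nat.eq_zero_or_pos r with h0 | hpos
  · have hd : (c : ℤ) ∣ a := Int.dvd_of_emod_eq_zero (by rw [← hr, h0]; rfl)
    have hu : IsUnit (c : ℤ) := h.isUnit_of_dvd' hd dvd_rfl
    have : c = 1 := by
      rcases Int.isUnit_iff.1 hu with h | h <;> omega
    subst this
    simp [ded_one]
  obtain ⟨s, rfl⟩ : ∃ s, c = r + s := ⟨c - r, by omega⟩
  have hs : 0 < s := by omega
  have e1 : ded a (r + s) = ded r (r + s) := ded_congr (by rw [hr]; simp)
  have e2 : ded (-a) (r + s) = ded s (r + s) := by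
    apply ded_congr
    have : (r : ℤ) ≡ a [ZMOD ((r + s : ℕ) : ℤ)] := by rw [hr]; exact Int.mod_modEq _ _
    have h2 : (-a) ≡ -r [ZMOD ((r + s : ℕ) : ℤ)] := this.symm.neg
    refine h2.trans ?_
    exact (Int.modEq_iff_dvd.2 ⟨1, by push_cast; ring⟩)
  have hra : IsCoprime (r : ℤ) ((r + s : ℕ) : ℤ) := by
    have : a = r + ((r + s : ℕ) : ℤ) * (a / ((r + s : ℕ) : ℤ)) := by
      rw [hr]; exact (Int.emod_add_mul_ediv a _).symm
    rw [this] at h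
    exact (IsCoprime.add_mul_left_left_iff).1 h
  have hcop : Nat.Coprime r (r + s) := Nat.isCoprime_iff_coprime.1 hra
  have hrs : Nat.Coprime r s := by simpa using hcop
  have hsc : Nat.Coprime s (r + s) := by simpa using hrs.symm
  have r1 := ded_recip hpos hc hcop
  have r2 := ded_recip hs hc hsc
  have r3 := ded_recip hpos hs hrs
  have p1 : ded ((r + s : ℕ) : ℤ) r = ded s r := ded_congr (by push_cast; simp)
  have p2 : ded ((r + s : ℕ) : ℤ) s = ded r s := ded_congr (by push_cast; simp)
  rw [e1, e2]
  rw [p1] at r1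
  rw [p2] at r2
  have hr0 : (r : ℚ) ≠ 0 := by positivity
  have hs0 : (s : ℚ) ≠ 0 := by positivity
  have hrs0 : ((r : ℚ) + s) ≠ 0 := by positivity
  have key : ((r : ℚ) ^ 2 + ((r + s : ℕ) : ℚ) ^ 2 + 1) / (r * ((r + s : ℕ) : ℚ))
      + ((s : ℚ) ^ 2 + ((r + s : ℕ) : ℚ) ^ 2 + 1) / (s * ((r + s : ℕ) : ℚ))
      - ((r : ℚ) ^ 2 + (s : ℚ) ^ 2 + 1) / (r * s) = 3 := by
    push_cast
    field_simp
    ring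
  linarith

/-- Extension of `ded` to a modulus of arbitrary sign, odd in the modulus. -/
def dedZ (a c : ℤ) : ℚ := (c.sign : ℚ) * ded a c.natAbs

theorem dedZ_add_mul (a c k : ℤ) : dedZ (a + k * c) c = dedZ a c := by
  unfold dedZ
  congr 1
  apply ded_congr
  rw [Int.natCast_natAbs]
  simp

theorem dedZ_unit (a : ℤ) {c : ℤ} (h : c = 1 ∨ c = -1) : dedZ a c = 0 := by
  rcases h with rfl | rfl <;> simp [dedZ, ded_one]

/-- Dedekind reciprocity for arguments of arbitrary sign. -/
theorem dedZ_recip {a c : ℤ} (ha : a ≠ 0) (hc : c ≠ 0) (h : IsCoprime a c) :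
    dedZ a c + dedZ c a = ((a : ℚ) ^ 2 + (c : ℚ) ^ 2 + 1) / (a * c) - 3 * ((a * c).sign : ℚ) := by
  have hn : Nat.Coprime a.natAbs c.natAbs := Int.isCoprime_iff_gcd_eq_one.1 h
  have ha' : 0 < a.natAbs := by omega
  have hc' : 0 < c.natAbs := by omega
  obtain ⟨m, hm⟩ : ∃ m, m = a.natAbs := ⟨_, rfl⟩
  obtain ⟨k, hk⟩ : ∃ m, m = c.natAbs := ⟨_, rfl⟩
  have hr := ded_recip ha' hc' hn
  have hz : IsCoprime (m : ℤ) (k : ℤ) := Nat.isCoprime_iff_coprime.2 (by rw [hm, hk]; exact hn)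
  rw [← hm, ← hk] at hr
  rw [← hm] at ha'
  rw [← hk] at hc'
  have n1 := ded_neg hc' hz
  have n2 := ded_neg ha' hz.symm
  unfold dedZ
  rw [← hm, ← hk, Int.sign_mul]
  have hm0 : (m : ℚ) ≠ 0 := by positivity
  have hk0 : (k : ℚ) ≠ 0 := by positivity
  rcases lt_or_gt_of_ne ha with h1 | h1 <;> rcases lt_or_gt_of_ne hc with h2 | h2
  · obtain rfl : a = -m := by omega
    obtain rfl : c = -k := by omega
    rw [Int.sign_eq_neg_one_of_neg h1, Int.sign_eq_neg_one_of_neg h2, n1, n2]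
    push_cast
    rw [neg_mul_neg (m : ℚ) (k : ℚ), neg_sq, neg_sq]
    linarith
  · obtain rfl : a = -m := by omega
    obtain rfl : c = k := by omega
    rw [Int.sign_eq_neg_one_of_neg h1, Int.sign_eq_one_of_pos h2, n1]
    push_cast
    rw [neg_mul (m : ℚ) (k : ℚ), neg_sq, div_neg]
    linarith
  · obtain rfl : a = m := by omega
    obtain rfl : c = -k := by omega
    rw [Int.sign_eq_neg_one_of_neg h2, Int.sign_eq_one_of_pos h1, n2]
    push_cast
    rw [mul_neg (m : ℚ) (k : ℚ), neg_sq, div_neg]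
    linarith
  · obtain rfl : a = m := by omega
    obtain rfl : c = k := by omega
    rw [Int.sign_eq_one_of_pos h1, Int.sign_eq_one_of_pos h2]
    push_cast
    linarith

/-! ### The Rademacher function -/

/-- The half-open upper half-plane: exactly one of `p`, `-p` lies in it when `p ≠ 0`. -/
def Upper (p : ℤ × ℤ) : Prop := 0 < p.2 ∨ (p.2 = 0 ∧ 0 < p.1)

open Classical in
/-- Indicator of the half-open upper half-plane. -/
def upInd (p : ℤ × ℤ) : ℚ := if Upper p then 1 else 0

open Classical in
/-- Indicator that the step from `p` to `q` enters the upper half-plane, that is, for positively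
oriented `p, q`, that it crosses the positive horizontal axis. -/
def crossInd (p q : ℤ × ℤ) : ℚ := if ¬ Upper p ∧ Upper q then 1 else 0

/-- Minus the Rademacher function of the matrix with columns `m`, `d` (of determinant one). On the
axis `m.2 = 0`, where the sign of the Dedekind term is ambiguous, the constant `-3` is half of the
jump `6` between the two half-planes; it is the choice compatible with `Upper`. -/
def rad (m d : ℤ × ℤ) : ℚ :=
  if m.2 = 0 then -(d.1 * d.2 : ℚ) - 3 else -((m.1 + d.2 : ℚ) / m.2) + dedZ d.2 m.2

theorem rad_shear_right {m d : ℤ × ℤ} (h : m.1 * d.2 - m.2 * d.1 = 1) (k : ℤ) :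
    rad m (d + k • m) = rad m d - k := by
  obtain ⟨a, c⟩ := m
  obtain ⟨b, e⟩ := d
  simp only [rad, Prod.fst_add, Prod.snd_add, Prod.smul_fst, Prod.smul_snd, smul_eq_mul] at h ⊢
  split_ifs with hc
  · subst hc
    have hq : (a : ℚ) * e = 1 := by exact_mod_cast (by linarith : a * e = 1)
    push_cast
    linear_combination (-k : ℚ) * hq
  · rw [dedZ_add_mul]
    have : (c : ℚ) ≠ 0 := by exact_mod_cast hc
    push_cast
    field_simp
    ring

/-- Adding a positive multiple of `d` to `m` raises `rad` by `e`, up to a jump of `-6` whenever `m`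
passes between the half-planes. The jump is written as `-12` for each entry into the upper
half-plane plus a coboundary, so that around a closed path only the entries count. -/
theorem rad_shear_left {m d : ℤ × ℤ} (h : m.1 * d.2 - m.2 * d.1 = 1) {e : ℤ} (he : 0 < e) :
    rad (m + e • d) d = rad m d + e - 12 * crossInd m (m + e • d)
      - 6 * (upInd m - upInd (m + e • d)) := by
  obtain ⟨a, c⟩ := m
  obtain ⟨b, t⟩ := d
  simp only [rad, crossInd, upInd, Upper,
    smul_eq_mul, Prod.mk_add_mk, Prod.smul_mk] at h ⊢
  have heQ : (0 : ℚ) < e := by exact_mod_cast he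
  have hq : (a : ℚ) * t - c * b = 1 := by exact_mod_cast h
  -- The path starts on the axis: then `t = a = ±1`, and it stays in the half-plane it starts in.
  by_cases hc : c = 0
  · subst hc
    have h1 : t * a = 1 := by linarith
    have hat : t = 1 ∧ a = 1 ∨ t = -1 ∧ a = -1 := Int.mul_eq_one_iff_eq_one_or_neg_one.1 h1
    have hr := dedZ_recip (a := t) (c := e * t) (by omega) (by
      rcases hat with h | h <;> rw [h.1] <;> omega) ⟨a, 0, by linarith⟩
    rw [dedZ_unit (e * t) (by tauto)] at hr
    have e1 : (t * (e * t)).sign = 1 := by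
      rcases hat with h | h <;> rw [h.1] <;> simpa using he
    rw [e1] at hr
    rcases hat with ⟨rfl, rfl⟩ | ⟨rfl, rfl⟩
    · have : ¬ e = 0 := by omega
      simp [this, he] at hr ⊢
      rw [hr]
      field_simp
      ring
    · have : ¬ e = 0 := by omega
      have : ¬ e < 0 := by omega
      simp [*] at hr ⊢
      rw [hr]
      field_simp
      ring
  -- The path ends on the axis, necessarily entering or leaving the upper half-plane.
  by_cases hc' : c + e * t = 0
  · have h1 : t * (a + e * b) = 1 := by linear_combination h + b * hc'
    have hat : t = 1 ∧ a + e * b = 1 ∨ t = -1 ∧ a + e * b = -1 :=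
      Int.mul_eq_one_iff_eq_one_or_neg_one.1 h1
    obtain rfl : c = -(e * t) := by omega
    have hr := dedZ_recip (a := t) (c := -(e * t)) (by omega) hc ⟨a + e * b, 0, by linarith⟩
    rw [dedZ_unit (-(e * t)) (c := t) (by tauto)] at hr
    have e1 : (t * -(e * t)).sign = -1 := by
      rcases hat with h | h <;> rw [h.1] <;> simpa using he
    rw [e1] at hr
    have hne : ¬ e = 0 := by omega
    rcases hat with ⟨rfl, h2⟩ | ⟨rfl, h2⟩
    · obtain rfl : a = 1 - e * b := by omega
      have h3 : ¬ e < 0 := by omega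
      simp [*] at hr ⊢
      rw [hr]
      field_simp
      ring
    · obtain rfl : a = -1 - e * b := by omega
      simp [*] at hr ⊢
      rw [hr]
      field_simp
      ring
  have hcQ : (c : ℚ) ≠ 0 := by exact_mod_cast hc
  have hcQ' : (c + e * t : ℚ) ≠ 0 := by exact_mod_cast hc'
  simp only [hc, hc', if_false, false_and, or_false]
  by_cases ht : t = 0
  · subst ht
    simp
    have : c * b = -1 := by linarith
    obtain rfl : b = -c := by
      rcases Int.mul_eq_neg_one_iff_eq_one_or_neg_one.1 this with h | h <;> omega
    push_cast
    split_ifs <;> first | omega | (field_simp; ring)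
  have htQ : (t : ℚ) ≠ 0 := by exact_mod_cast ht
  -- Off the axis, reciprocity turns both Dedekind terms into `dedZ c t`, which is unchanged when
  -- `c` is replaced by `c + e * t`.
  have r1 := dedZ_recip ht hc ⟨a, -b, by linarith⟩
  have r2 := dedZ_recip ht hc' ⟨a + e * b, -b, by linarith⟩
  rw [dedZ_add_mul] at r2
  have key : -((a + e * b + t : ℚ) / (c + e * t)) + ((t : ℚ) ^ 2 + (c + e * t : ℚ) ^ 2 + 1) / (t * (c + e * t))
      = -((a + t : ℚ) / c) + ((t : ℚ) ^ 2 + (c : ℚ) ^ 2 + 1) / (t * c) + e := by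
    field_simp
    linear_combination (e * t : ℚ) * hq
  push_cast at r2 ⊢
  have hs : (3 * ((t * (c + e * t)).sign : ℚ)) - 3 * ((t * c).sign : ℚ)
      = 12 * (if ¬ 0 < c ∧ 0 < c + e * t then 1 else 0)
        + 6 * ((if 0 < c then 1 else 0) - (if 0 < c + e * t then 1 else 0)) := by
    simp only [Int.sign_mul]
    rcases lt_or_gt_of_ne ht with h1 | h1
    · have h3 : e * t < 0 := mul_neg_of_pos_of_neg he h1
      rcases lt_or_gt_of_ne hc with h2 | h2
      · have h4 : c + e * t < 0 := by omega
        simp [Int.sign_eq_neg_one_of_neg, h1, h2, h4, h4.not_gt, h2.not_gt]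
      · rcases lt_or_gt_of_ne hc' with h4 | h4
        · simp [Int.sign_eq_neg_one_of_neg, Int.sign_eq_one_of_pos, h1, h2, h4, h4.not_gt]; norm_num
        · simp [Int.sign_eq_neg_one_of_neg, Int.sign_eq_one_of_pos, h1, h2, h4]
    · have h3 : 0 < e * t := mul_pos he h1
      rcases lt_or_gt_of_ne hc with h2 | h2
      · rcases lt_or_gt_of_ne hc' with h4 | h4
        · simp [Int.sign_eq_neg_one_of_neg, Int.sign_eq_one_of_pos, h1, h2, h4, h4.not_gt, h2.not_gt]
        · simp [Int.sign_eq_neg_one_of_neg, Int.sign_eq_one_of_pos, h1, h2, h4, h2.not_gt]; norm_num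
      · have h4 : 0 < c + e * t := by omega
        simp [Int.sign_eq_one_of_pos, h1, h2, h4]
  linarith

/-! ### Going once around the origin -/

theorem fin_add_two {ν : ℕ} [NeZero ν] (i : Fin ν) : i + 2 = i + 1 + 1 := by
  apply Fin.ext
  simp [Fin.val_add, Fin.coe_ofNat_eq_mod, add_assoc]

open scoped Fin.NatCast Fin.CommRing in
theorem fin_cyclic_induction {ν : ℕ} [NeZero ν] {P : Fin ν → Prop} (i : Fin ν) (h0 : P i)
    (hs : ∀ i, P i → P (i + 1)) (j : Fin ν) : P j := by
  have key : ∀ k : ℕ, P (i + (k : Fin ν)) := by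
    intro k
    induction k with
    | zero => simpa using h0
    | succ k ih =>
      rw [Nat.cast_succ, ← add_assoc]
      exact hs _ ih
  have := key (j - i).val
  rw [Fin.cast_val_eq_self] at this
  simpa using this

theorem fin_sum_succ {ν : ℕ} [NeZero ν] (f : Fin ν → ℚ) : ∑ i, f (i + 1) = ∑ i, f i :=
  Equiv.sum_comp (Equiv.addRight (1 : Fin ν)) f

/-- Within the half-plane, being anticlockwise of one another is transitive. -/
theorem detZ_trans {u v w : ℤ × ℤ} (hu : Upper u) (hv : Upper v) (hw : Upper w)
    (huv : 0 < detZ u v) (hvw : 0 < detZ v w) : 0 < detZ u w := by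
  obtain ⟨a, b⟩ := u
  obtain ⟨c, d⟩ := v
  obtain ⟨x, y⟩ := w
  simp only [detZ, Upper] at *
  have hd : 0 < d := by
    rcases hv with h | ⟨h, h'⟩
    · exact h
    · subst h
      rcases hu with h | ⟨h, h''⟩
      · nlinarith
      · subst h; simp at huv
  have hb : 0 ≤ b := by omega
  have hy : 0 < y := by
    rcases hw with h | ⟨h, h'⟩
    · exact h
    · subst h; nlinarith
  have id : d * (a * y - b * x) = b * (c * y - d * x) + y * (a * d - b * c) := by ring
  have : 0 < d * (a * y - b * x) := by rw [id]; positivity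
  exact pos_of_mul_pos_right this hd.le

/-- A closed path that always turns anticlockwise cannot stay in a half-plane. -/
theorem not_all_upper {ν : ℕ} [NeZero ν] (m : Fin ν → ℤ × ℤ)
    (hdet : ∀ i, 0 < detZ (m i) (m (i + 1))) (hU : ∀ i, Upper (m i)) : False := by
  have h := fin_cyclic_induction (P := fun j => 0 < detZ (m 0) (m j)) (0 + 1) (hdet 0)
    (fun i hi => detZ_trans (hU _) (hU _) (hU _) hi (hdet i)) 0
  simp only [detZ] at h
  linarith [mul_comm (m 0).1 (m 0).2]

theorem upper_neg {p q : ℤ × ℤ} (h : 0 < detZ p q) (hp : ¬ Upper p) : Upper (-p) := by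
  obtain ⟨a, b⟩ := p
  simp only [Upper, detZ, Prod.neg_mk] at *
  by_contra h'
  have hb : b = 0 := by omega
  have ha : a = 0 := by omega
  subst ha hb
  simp at h

theorem exists_up {ν : ℕ} [NeZero ν] (m : Fin ν → ℤ × ℤ)
    (hdet : ∀ i, 0 < detZ (m i) (m (i + 1))) : ∃ i, ¬ Upper (m i) ∧ Upper (m (i + 1)) := by
  by_contra! hno
  by_cases hall : ∀ i, Upper (m i)
  · exact not_all_upper m hdet hall
  · push Not at hall
    obtain ⟨i, hi⟩ := hall
    have hl := fin_cyclic_induction (P := fun j => ¬ Upper (m j)) i hi (fun i hi => hno i hi)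
    refine not_all_upper (fun i => - m i) (fun i => ?_) (fun i => upper_neg (hdet i) (hl i))
    simpa [detZ] using hdet i

/-- An entry into the upper half-plane comes from strictly below: the negative horizontal axis is
left downwards by an anticlockwise step. -/
theorem up_signs {p q : ℤ × ℤ} (h : 0 < detZ p q) (hp : ¬ Upper p) (hq : Upper q) :
    p.2 < 0 ∧ 0 ≤ q.2 := by
  have hp' := upper_neg h hp
  obtain ⟨a, b⟩ := p
  obtain ⟨c, d⟩ := q
  simp only [Upper, detZ, Prod.neg_mk] at *
  refine ⟨?_, by omega⟩
  by_contra hb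
  have hb : b = 0 := by omega
  subst hb
  nlinarith [show a ≤ 0 by omega, show 0 ≤ d by omega]

/-- The polygon with vertices `m` is strictly convex: the line through `m i` and `m (i + 1)`, which
is `{v | det (m i, v) + det (v, m (i + 1)) = det (m i, m (i + 1))}`, has all vertices on the side
of the origin and meets no vertex other than these two. -/
def StrictSupport {ν : ℕ} [NeZero ν] (m : Fin ν → ℤ × ℤ) : Prop :=
  ∀ i j, detZ (m i) (m j) + detZ (m j) (m (i + 1)) ≤ detZ (m i) (m (i + 1)) ∧
    (detZ (m i) (m j) + detZ (m j) (m (i + 1)) = detZ (m i) (m (i + 1)) → j = i ∨ j = i + 1)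

/-- If edge `i` crosses the positive horizontal axis, the linear form of edge `j` at the crossing
point is at most its value on edge `j`. Here the crossing point is scaled to
`(m (i + 1)).2 • m i - (m i).2 • m (i + 1) = (det (m i, m (i + 1)), 0)`. As `m (i + 1)` has positive
weight in it, equality puts `m (i + 1)` on edge `j`. -/
theorem up_le {ν : ℕ} [NeZero ν] {m : Fin ν → ℤ × ℤ}
    (hdet : ∀ i, 0 < detZ (m i) (m (i + 1))) (hconv : StrictSupport m) {i : Fin ν}
    (hi : ¬ Upper (m i) ∧ Upper (m (i + 1))) (j : Fin ν) :
    detZ (m i) (m (i + 1)) * ((m (j + 1)).2 - (m j).2)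
        ≤ detZ (m j) (m (j + 1)) * ((m (i + 1)).2 - (m i).2) ∧
      (detZ (m i) (m (i + 1)) * ((m (j + 1)).2 - (m j).2)
        = detZ (m j) (m (j + 1)) * ((m (i + 1)).2 - (m i).2) → i + 1 = j ∨ i + 1 = j + 1) := by
  obtain ⟨s1, s2⟩ := up_signs (hdet i) hi.1 hi.2
  obtain ⟨l1, -⟩ := hconv j i
  obtain ⟨l2, h2⟩ := hconv j (i + 1)
  have id : detZ (m i) (m (i + 1)) * ((m (j + 1)).2 - (m j).2)
      = (m (i + 1)).2 * (detZ (m j) (m i) + detZ (m i) (m (j + 1)))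
        - (m i).2 * (detZ (m j) (m (i + 1)) + detZ (m (i + 1)) (m (j + 1))) := by
    simp only [detZ]; ring
  have t1 := mul_le_mul_of_nonneg_left l1 s2
  have t2 := mul_le_mul_of_nonneg_left l2 (neg_pos.2 s1).le
  refine ⟨by rw [id]; linarith, fun h => h2 ?_⟩
  rw [id] at h
  have : -(m i).2 * (detZ (m j) (m (i + 1)) + detZ (m (i + 1)) (m (j + 1)))
      = -(m i).2 * detZ (m j) (m (j + 1)) := le_antisymm t2 (by linarith)
  exact mul_left_cancel₀ (neg_pos.2 s1).ne' this

/-- A convex polygon around the origin crosses the positive horizontal axis only once. -/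
theorem up_unique {ν : ℕ} [NeZero ν] {m : Fin ν → ℤ × ℤ}
    (hdet : ∀ i, 0 < detZ (m i) (m (i + 1))) (hconv : StrictSupport m) {i j : Fin ν}
    (hi : ¬ Upper (m i) ∧ Upper (m (i + 1))) (hj : ¬ Upper (m j) ∧ Upper (m (j + 1))) :
    i = j := by
  obtain ⟨l1, h1⟩ := up_le hdet hconv hi j
  obtain ⟨l2, h2⟩ := up_le hdet hconv hj i
  rcases h1 (le_antisymm l1 l2) with h | h
  · exact absurd (h ▸ hi.2) hj.1
  · exact add_right_cancel h

theorem sum_crossInd {ν : ℕ} [NeZero ν] {m : Fin ν → ℤ × ℤ}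
    (hdet : ∀ i, 0 < detZ (m i) (m (i + 1))) (hconv : StrictSupport m) :
    ∑ i, crossInd (m i) (m (i + 1)) = 1 := by
  obtain ⟨i, hi⟩ := exists_up m hdet
  rw [Finset.sum_eq_single i]
  · exact if_pos hi
  · intro j _ hj
    exact if_neg fun h => hj (up_unique hdet hconv h hi)
  · simp

/-! ### The twelve theorem -/

/-- The twelve theorem in the unimodular case: `e i` are the edge lengths, `-k i` the edge lengths
of the dual polygon. -/
theorem twelve_unimodular {ν : ℕ} [NeZero ν] (m d : Fin ν → ℤ × ℤ) (e k : Fin ν → ℤ)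
    (he : ∀ i, 0 < e i) (hmd : ∀ i, detZ (m i) (d i) = 1)
    (hm : ∀ i, m (i + 1) = m i + e i • d i) (hd : ∀ i, d (i + 1) = d i + k i • m (i + 1))
    (hconv : StrictSupport m) :
    ∑ i, ((e i : ℚ) - k i) = 12 := by
  have hq : ∀ i, detZ (m i) (m (i + 1)) = e i := by
    intro i
    have := hmd i
    simp only [hm, detZ, Prod.fst_add, Prod.snd_add, Prod.smul_fst, Prod.smul_snd,
      smul_eq_mul] at this ⊢
    linear_combination e i * this
  have hdet : ∀ i, 0 < detZ (m i) (m (i + 1)) := fun i => by rw [hq]; exact he i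
  have step : ∀ i, rad (m (i + 1)) (d (i + 1)) = rad (m i) (d i) + (e i - k i)
      - 12 * crossInd (m i) (m (i + 1)) - 6 * upInd (m i) + 6 * upInd (m (i + 1)) := by
    intro i
    have h1 : (m (i + 1)).1 * (d i).2 - (m (i + 1)).2 * (d i).1 = 1 := by
      rw [← hmd i, hm]
      simp only [detZ, Prod.fst_add, Prod.snd_add, Prod.smul_fst, Prod.smul_snd, smul_eq_mul]
      ring
    have h2 := rad_shear_left (m := m i) (d := d i) (hmd i) (he i)
    rw [← hm] at h2
    rw [hd, rad_shear_right h1, h2]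
    ring
  have hs := Finset.sum_congr rfl fun i (_ : i ∈ Finset.univ) => step i
  rw [fin_sum_succ (fun i => rad (m i) (d i))] at hs
  simp only [Finset.sum_add_distrib, Finset.sum_sub_distrib, ← Finset.mul_sum] at hs
  rw [fin_sum_succ (fun i => upInd (m i)), sum_crossInd hdet hconv] at hs
  rw [Finset.sum_sub_distrib]
  linarith

/-- The case of index `ℓ` reduces to the unimodular one: by induction along the boundary all `n i`
and `d i` lie in the sublattice spanned by `n 0` and `d 0`, and coordinates with respect to this
basis divide all determinants by `ℓ`. -/
theorem twelve_index {ν : ℕ} [NeZero ν] {ℓ : ℤ} (hℓ : 0 < ℓ) (n d : Fin ν → ℤ × ℤ)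
    (e k : Fin ν → ℤ) (he : ∀ i, 0 < e i) (hnd : ∀ i, detZ (n i) (d i) = ℓ)
    (hn : ∀ i, n (i + 1) = n i + e i • d i) (hd : ∀ i, d (i + 1) = d i + k i • n (i + 1))
    (hconv : StrictSupport n) :
    ∑ i, ((e i : ℚ) - k i) = 12 := by
  have hex : ∀ i, ∃ m b : ℤ × ℤ, n i = m.1 • n 0 + m.2 • d 0 ∧ d i = b.1 • n 0 + b.2 • d 0 := by
    refine fin_cyclic_induction 0 ⟨(1, 0), (0, 1), by simp, by simp⟩ ?_
    rintro i ⟨m, b, h1, h2⟩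
    refine ⟨m + e i • b, b + k i • (m + e i • b), ?_, ?_⟩
    · rw [hn, h1, h2]
      simp only [Prod.fst_add, Prod.snd_add, Prod.smul_fst, Prod.smul_snd, smul_eq_mul]
      module
    · rw [hd, hn, h1, h2]
      simp only [Prod.fst_add, Prod.snd_add, Prod.smul_fst, Prod.smul_snd, smul_eq_mul]
      module
  choose m b hm hb using hex
  have h0 := hnd 0
  have hinj : ∀ p q : ℤ × ℤ, p.1 • n 0 + p.2 • d 0 = q.1 • n 0 + q.2 • d 0 → p = q := by
    intro p q h
    simp only [Prod.ext_iff, Prod.fst_add, Prod.snd_add, Prod.smul_fst, Prod.smul_snd,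
      smul_eq_mul] at h
    obtain ⟨x, y⟩ := h
    simp only [detZ] at h0
    ext
    · apply mul_right_cancel₀ hℓ.ne'
      rw [← h0]; linear_combination (d 0).2 * x - (d 0).1 * y
    · apply mul_right_cancel₀ hℓ.ne'
      rw [← h0]; linear_combination (n 0).1 * y - (n 0).2 * x
  have hdet : ∀ p q : ℤ × ℤ,
      detZ (p.1 • n 0 + p.2 • d 0) (q.1 • n 0 + q.2 • d 0) = ℓ * detZ p q := by
    intro p q
    rw [← h0]
    simp only [detZ, Prod.fst_add, Prod.snd_add, Prod.smul_fst, Prod.smul_snd, smul_eq_mul]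
    ring
  have hdn : ∀ i j, detZ (n i) (n j) = ℓ * detZ (m i) (m j) := fun i j => by
    rw [hm i, hm j, hdet]
  refine twelve_unimodular m b e k he ?_ ?_ ?_ ?_
  · intro i
    have := hnd i
    rw [hm i, hb i, hdet] at this
    exact mul_left_cancel₀ hℓ.ne' (by rw [this, mul_one])
  · intro i
    apply hinj
    rw [← hm, hn, hm i, hb i]
    simp only [Prod.fst_add, Prod.snd_add, Prod.smul_fst, Prod.smul_snd, smul_eq_mul]
    module
  · intro i
    apply hinj
    rw [← hb, hd, hm (i + 1), hb i]
    simp only [Prod.fst_add, Prod.snd_add, Prod.smul_fst, Prod.smul_snd, smul_eq_mul]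
    module
  · intro i j
    have := hconv i j
    simp only [hdn, ← mul_add] at this
    exact ⟨le_of_mul_le_mul_left this.1 hℓ, fun h => this.2 (by rw [h])⟩

/-! ### From the polygon to integer data -/

theorem IsPrimitive.isCoprime {p : ℤ × ℤ} (h : IsPrimitive (realVec p)) : IsCoprime p.1 p.2 := by
  obtain ⟨-, hne, hseg⟩ := h
  have hg0 : Int.gcd p.1 p.2 ≠ 0 := by
    intro h0
    rw [Int.gcd_eq_zero_iff] at h0
    exact hne (by simp [realVec, h0.1, h0.2])
  rw [Int.isCoprime_iff_gcd_eq_one]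
  obtain ⟨a, ha⟩ := Int.gcd_dvd_left p.1 p.2
  obtain ⟨b, hb⟩ := Int.gcd_dvd_right p.1 p.2
  set g := Int.gcd p.1 p.2 with hg
  have hgR : (0 : ℝ) < g := by exact_mod_cast Nat.pos_of_ne_zero hg0
  have hg1 : (1 : ℝ) ≤ g := by exact_mod_cast Nat.pos_of_ne_zero hg0
  have haR : (p.1 : ℝ) = g * a := by exact_mod_cast ha
  have hbR : (p.2 : ℝ) = g * b := by exact_mod_cast hb
  have hmem : realVec (a, b) ∈ segment ℝ (0 : V) (realVec p) ∩ latticePts := by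
    refine ⟨⟨1 - (g : ℝ)⁻¹, (g : ℝ)⁻¹, ?_, by positivity, by ring, ?_⟩, (a, b), rfl⟩
    · exact sub_nonneg.2 (inv_le_one_of_one_le₀ hg1)
    · ext <;> simp [realVec, haR, hbR, hgR.ne']
  rw [hseg] at hmem
  rcases hmem with h | h
  · simp only [realVec, Prod.ext_iff, Prod.fst_zero, Prod.snd_zero] at h
    exact absurd (by simp [realVec, haR, hbR, h.1, h.2]) hne
  · simp only [mem_singleton_iff, realVec, Prod.ext_iff, haR, hbR] at h
    by_contra hg2
    have hg3 : (g : ℝ) - 1 ≠ 0 := sub_ne_zero.2 (by exact_mod_cast hg2)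
    have a0 : (a : ℝ) = 0 := by
      have : ((g : ℝ) - 1) * a = 0 := by linarith [h.1]
      exact (mul_eq_zero.1 this).resolve_left hg3
    have b0 : (b : ℝ) = 0 := by
      have : ((g : ℝ) - 1) * b = 0 := by linarith [h.2]
      exact (mul_eq_zero.1 this).resolve_left hg3
    exact hne (by simp [realVec, haR, hbR, a0, b0])

theorem realVec_injective : Function.Injective realVec := by
  intro p q h
  simpa [realVec, Prod.ext_iff] using h

theorem strictSupport_of_edges {ν : ℕ} [NeZero ν] {Q : Set V} (h0Q : (0 : V) ∈ Q)
    (n : Fin ν → ℤ × ℤ) (hinj : Function.Injective n)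
    (hvert : Set.extremePoints ℝ Q = Set.range (fun i => realVec (n i)))
    (hdetpos : ∀ i : Fin ν, 0 < detZ (n i) (n (i + 1)))
    (hedge : ∀ i : Fin ν, IsEdge Q (segment ℝ (realVec (n i)) (realVec (n (i + 1))))) :
    StrictSupport n := by
  intro i j
  obtain ⟨⟨η, hη, hF⟩, -⟩ := hedge i
  have hext : ∀ k, realVec (n k) ∈ Set.extremePoints ℝ Q := fun k => by
    rw [hvert]; exact ⟨k, rfl⟩
  have hA := (hF ▸ left_mem_segment ℝ _ _ :
    realVec (n i) ∈ {y ∈ Q | ∀ z ∈ Q, dotV η y ≤ dotV η z})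
  have hB := (hF ▸ right_mem_segment ℝ _ _ :
    realVec (n (i + 1)) ∈ {y ∈ Q | ∀ z ∈ Q, dotV η y ≤ dotV η z})
  obtain ⟨t, ht⟩ : ∃ t, t = dotV η (realVec (n i)) := ⟨_, rfl⟩
  have ht' : t = dotV η (realVec (n (i + 1))) :=
    ht.trans (le_antisymm (hA.2 _ hB.1) (hB.2 _ hA.1))
  have hqR : (0 : ℝ) < detZ (n i) (n (i + 1)) := by exact_mod_cast hdetpos i
  have e1 := ht
  have e2 := ht'
  simp only [dotV, realVec] at e1 e2
  -- The endpoints form a basis of the plane, so `η` is determined by its common value `t` on them: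
  -- up to the factor `t / det (n i, n (i + 1))` it is the form in `StrictSupport`.
  have hη1 : (detZ (n i) (n (i + 1)) : ℝ) * η.1 = t * ((n (i + 1)).2 - (n i).2) := by
    simp only [detZ]; push_cast
    linear_combination (n i).2 * e2 - (n (i + 1)).2 * e1
  have hη2 : (detZ (n i) (n (i + 1)) : ℝ) * η.2 = t * ((n i).1 - (n (i + 1)).1) := by
    simp only [detZ]; push_cast
    linear_combination (n (i + 1)).1 * e1 - (n i).1 * e2
  have ht0 : t < 0 := by
    refine lt_of_le_of_ne ?_ fun h => hη ?_
    · have := hA.2 0 h0Q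
      rw [← ht] at this
      simpa [dotV] using this
    · rw [h, zero_mul] at hη1 hη2
      ext
      · exact (mul_eq_zero.1 hη1).resolve_left hqR.ne'
      · exact (mul_eq_zero.1 hη2).resolve_left hqR.ne'
  have hval : (detZ (n i) (n (i + 1)) : ℝ) * dotV η (realVec (n j))
      = t * (detZ (n i) (n j) + detZ (n j) (n (i + 1)) : ℤ) := by
    simp only [dotV, realVec]
    rw [mul_add, ← mul_assoc, ← mul_assoc, hη1, hη2]
    simp only [detZ]; push_cast
    ring
  have hjQ := (hext j).1
  constructor
  · have h1 := mul_le_mul_of_nonneg_left (hA.2 _ hjQ) hqR.le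
    rw [← ht, hval, mul_comm] at h1
    exact_mod_cast (mul_le_mul_left_of_neg ht0).1 h1
  · intro h
    rw [h, mul_comm t] at hval
    have hj : dotV η (realVec (n j)) = t := mul_left_cancel₀ hqR.ne' hval
    have hmem : realVec (n j) ∈ segment ℝ (realVec (n i)) (realVec (n (i + 1))) := by
      rw [hF]
      exact ⟨hjQ, fun z hz => by rw [hj, ht]; exact hA.2 z hz⟩
    rcases (mem_extremePoints_iff_forall_segment.1 (hext j)).2 _ hA.1 _ hB.1 hmem with h | h
    · exact Or.inl (hinj (realVec_injective h)).symm
    · exact Or.inr (hinj (realVec_injective h)).symm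

/-- Consecutive vertices of an `ℓ`-reflexive polygon differ by a multiple of an integer vector `d`,
orthogonal to the primitive edge normal, with `det (p, d) = ℓ`. -/
theorem edge_direction {ℓ : ℕ} (hℓ : 0 < ℓ) {Q : Set V} (hQ : IsLReflexive ℓ Q) {p q : ℤ × ℤ}
    (hpq : 0 < detZ p q) (hedge : IsEdge Q (segment ℝ (realVec p) (realVec q))) :
    ∃ (e : ℤ) (d : ℤ × ℤ), 0 < e ∧ q = p + e • d ∧ detZ p d = ℓ := by
  obtain ⟨η, hη, hsub⟩ := hQ.edge_cond _ hedge
  obtain ⟨r, hr⟩ := hη.1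
  change η = realVec r at hr
  subst hr
  have h1 : dotV (realVec r) (realVec p) = -(ℓ : ℝ) := hsub (left_mem_segment ℝ _ _)
  have h2 : dotV (realVec r) (realVec q) = -(ℓ : ℝ) := hsub (right_mem_segment ℝ _ _)
  simp only [dotV, realVec] at h1 h2
  have z1 : r.1 * p.1 + r.2 * p.2 = -(ℓ : ℤ) := by exact_mod_cast h1
  have z2 : r.1 * q.1 + r.2 * q.2 = -(ℓ : ℤ) := by exact_mod_cast h2
  obtain ⟨x, y, hxy⟩ := hη.isCoprime
  have hq : q = p + (y * (q.1 - p.1) - x * (q.2 - p.2)) • (r.2, -r.1) := by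
    ext
    · simp
      linear_combination (p.1 - q.1) * hxy + x * (z2 - z1)
    · simp
      linear_combination (p.2 - q.2) * hxy + y * (z2 - z1)
  have hd : detZ p (r.2, -r.1) = ℓ := by
    simp only [detZ]; linarith
  refine ⟨_, _, ?_, hq, hd⟩
  have hdq : detZ p q = (y * (q.1 - p.1) - x * (q.2 - p.2)) * ℓ := by
    rw [← hd]
    nth_rewrite 1 [hq]
    simp only [detZ, Prod.fst_add, Prod.snd_add, Prod.smul_fst, Prod.smul_snd, smul_eq_mul]
    ring
  rw [hdq] at hpq
  exact pos_of_mul_pos_left hpq (by positivity)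

theorem exists_smul_of_detZ_eq_zero {p v : ℤ × ℤ} (hp : IsCoprime p.1 p.2) (h : detZ p v = 0) :
    ∃ k : ℤ, v = k • p := by
  obtain ⟨x, y, hxy⟩ := hp
  simp only [detZ] at h
  refine ⟨x * v.1 + y * v.2, ?_⟩
  ext
  · simp only [Prod.smul_fst, smul_eq_mul]; linear_combination (-v.1) * hxy - y * h
  · simp only [Prod.smul_snd, smul_eq_mul]; linear_combination (-v.2) * hxy + x * h

/-- **Determinantal identity for ℓ-reflexive polygons.** The vertices of `Q` are
`n 0, …, n (ν−1)` in anticlockwise order (indices read modulo ν). -/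
theorem determinantal_identity (ℓ ν : ℕ) [NeZero ν] (hℓ : 0 < ℓ) (hν : 3 ≤ ν)
    (Q : Set V) (hQ : IsLReflexive ℓ Q) (n : Fin ν → ℤ × ℤ)
    (hinj : Function.Injective n)
    (hvert : Set.extremePoints ℝ Q = Set.range (fun i => realVec (n i)))
    (hdetpos : ∀ i : Fin ν, 0 < detZ (n i) (n (i + 1)))
    (hedge : ∀ i : Fin ν, IsEdge Q (segment ℝ (realVec (n i)) (realVec (n (i + 1))))) :
    ∑ i : Fin ν, ((detZ (n i) (n (i + 1)) : ℚ) / (ℓ : ℚ)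
        + 2 * (ℓ : ℚ) / (detZ (n i) (n (i + 1)) : ℚ))
      = ∑ i : Fin ν, (ℓ : ℚ) * (detZ (n i) (n (i + 2)) : ℚ)
          / ((detZ (n i) (n (i + 1)) : ℚ) * (detZ (n (i + 1)) (n (i + 2)) : ℚ)) + 12 := by
  have hdir := fun i => edge_direction hℓ hQ (hdetpos i) (hedge i)
  choose e d he hn hnd using hdir
  have hprim : ∀ i, IsCoprime (n i).1 (n i).2 := fun i =>
    (hQ.vertices_primitive _ (by rw [hvert]; exact ⟨i, rfl⟩)).isCoprime
  -- Both `d i` and `d (i + 1)` have determinant `ℓ` with the primitive vector `n (i + 1)`.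
  have hturn : ∀ i, ∃ k : ℤ, d (i + 1) - d i = k • n (i + 1) := by
    intro i
    apply exists_smul_of_detZ_eq_zero (hprim _)
    have h1 := hnd i
    have h2 := hnd (i + 1)
    rw [hn] at h2 ⊢
    simp only [detZ, Prod.fst_add, Prod.snd_add, Prod.fst_sub, Prod.snd_sub, Prod.smul_fst,
      Prod.smul_snd, smul_eq_mul] at h1 h2 ⊢
    linear_combination h2 - h1
  choose k hk using hturn
  have hd : ∀ i, d (i + 1) = d i + k i • n (i + 1) := fun i => by rw [← hk]; abel
  have h12 := twelve_index (ℓ := ℓ) (by exact_mod_cast hℓ) n d e k he hnd hn hd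
    (strictSupport_of_edges (interior_subset hQ.zero_mem_interior) n hinj hvert hdetpos hedge)
  have hq : ∀ i, detZ (n i) (n (i + 1)) = ℓ * e i := by
    intro i
    rw [hn, ← hnd i]
    simp only [detZ, Prod.fst_add, Prod.snd_add, Prod.smul_fst, Prod.smul_snd, smul_eq_mul]
    ring
  have hq2 : ∀ i, detZ (n i) (n (i + 2)) = ℓ * (e i + e (i + 1) + e i * e (i + 1) * k i) := by
    intro i
    rw [fin_add_two, hn (i + 1), hd, hn i, ← hnd i]
    simp only [detZ, Prod.fst_add, Prod.snd_add, Prod.smul_fst, Prod.smul_snd, smul_eq_mul]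
    ring
  have hℓQ : (ℓ : ℚ) ≠ 0 := by exact_mod_cast hℓ.ne'
  have heQ : ∀ i, (e i : ℚ) ≠ 0 := fun i => by exact_mod_cast (he i).ne'
  have hl : ∀ i, ((detZ (n i) (n (i + 1)) : ℚ) / (ℓ : ℚ)
      + 2 * (ℓ : ℚ) / (detZ (n i) (n (i + 1)) : ℚ)) = e i + 2 * (1 / e i : ℚ) := by
    intro i
    have := heQ i
    rw [hq]
    push_cast
    field_simp
  have hr : ∀ i, (ℓ : ℚ) * (detZ (n i) (n (i + 2)) : ℚ)
      / ((detZ (n i) (n (i + 1)) : ℚ) * (detZ (n (i + 1)) (n (i + 2)) : ℚ))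
      = (1 / e i : ℚ) + (1 / e (i + 1) : ℚ) + k i := by
    intro i
    have h1 := heQ i
    have h2 := heQ (i + 1)
    rw [hq2, hq, fin_add_two, hq]
    push_cast
    field_simp
    ring
  rw [Finset.sum_congr rfl fun i _ => hl i, Finset.sum_congr rfl fun i _ => hr i]
  simp only [Finset.sum_add_distrib, Finset.sum_sub_distrib, ← Finset.mul_sum] at h12 ⊢
  rw [fin_sum_succ (fun i => (1 / e i : ℚ))]
  linarith
end
end
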